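/- Let y₀ ∈ ℝⁿ with Dg(y₀) ≠ 0 and suppose t̄ₛ(y₀) < tₛ(y₀) with t̄ₛ(y₀) < ∞. Then for every real t with t̄ₛ(y₀) ≤ t ≤ tₛ(y₀), the function u is not (Fréchet) differentiable at the point (X(y₀,t), t). (So the whole characteristic segment between the first and second termination points consists of nondifferentiable points of u.) -/

import Mathlib

open scoped InnerProductSpace Topology ENNReal
open Filter

noncomputable section

/-- Euclidean space `ℝⁿ`. -/
abbrev Euc (n : ℕ) := EuclideanSpace ℝ (Fin n)

/-- Hopf–Lax solution of the Eikonal equation `uₜ + |∇u| = 0` with initial data `g`: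
`u(x,t) = min {g(y) : |y - x| ≤ t}`. -/
def HLu {n : ℕ} (g : Euc n → ℝ) (x : Euc n) (t : ℝ) : ℝ :=
  sInf (g '' Metric.closedBall x t)

/-- The set of minimizers `L(x,t) = {y : |y - x| ≤ t ∧ g y = u(x,t)}`. -/
def HLL {n : ℕ} (g : Euc n → ℝ) (x : Euc n) (t : ℝ) : Set (Euc n) :=
  {y | ‖y - x‖ ≤ t ∧ g y = HLu g x t}

/-- The characteristic from `y₀`: `X(y₀,t) = y₀ + t • Dg(y₀)/|Dg(y₀)|`. -/
def charX {n : ℕ} (Dg : Euc n → Euc n) (y₀ : Euc n) (t : ℝ) : Euc n :=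
  y₀ + t • (‖Dg y₀‖⁻¹ • Dg y₀)

/-- First termination time `t̄ₛ(y₀) = sup {t > 0 : L(X(y₀,t),t) = {y₀}}`, in `[0,∞]`
(`sup ∅ = 0`). -/
def tbar {n : ℕ} (g : Euc n → ℝ) (Dg : Euc n → Euc n) (y₀ : Euc n) : ℝ≥0∞ :=
  sSup (ENNReal.ofReal '' {t : ℝ | 0 < t ∧ HLL g (charX Dg y₀ t) t = {y₀}})

/-- Second termination time `tₛ(y₀) = inf {t > 0 : y₀ ∉ L(X(y₀,t),t)}`, in `[0,∞]`
(`inf ∅ = ∞`). -/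
def tsnd {n : ℕ} (g : Euc n → ℝ) (Dg : Euc n → Euc n) (y₀ : Euc n) : ℝ≥0∞ :=
  sInf (ENNReal.ofReal '' {t : ℝ | 0 < t ∧ y₀ ∉ HLL g (charX Dg y₀ t) t})

/-!
Let `x = X(y₀, t)`. If `u(·, t)` has gradient `p ≠ 0` at `x` and `y ∈ L(x, t)`, then `x` maximizes
`u(·, t)` on the closed ball of radius `t` around `y`, because every point of that ball sees the
competitor `y`. Hence `x = y + t • p / |p|`, so `L(x, t)` has at most one point. Translating `y₀`
along with `x` shows that `p` can only be `Dg(y₀)`, so it suffices to find a minimizer other than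
`y₀` for every `t` between the two termination times.

The balls `B̄(X(y₀, t), t)` increase with `t` and are internally tangent at `y₀`. A second minimizer
therefore persists up to `tₛ`, and it lies in the interior of every later ball, which makes it a
local minimum of `g`. Since `g` is strictly differentiable at `y₀` with `Dg(y₀) ≠ 0`, it has no
local minima near `y₀`. So as the time decreases to `t̄ₛ` the second minimizers stay away from `y₀`,
and they accumulate at a second minimizer at time `t̄ₛ`.
-/

section TangentBalls

variable {E : Type*} [NormedAddCommGroup E]

theorem norm_inv_norm_smul_le_one [NormedSpace ℝ E] (p : E) : ‖‖p‖⁻¹ • p‖ ≤ 1 := by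
  rw [norm_smul, norm_inv, norm_norm]
  exact inv_mul_le_one

theorem closedBall_add_smul_subset_closedBall [NormedSpace ℝ E] {y₀ v : E} (hv : ‖v‖ ≤ 1)
    {s t : ℝ} (hst : s ≤ t) :
    Metric.closedBall (y₀ + s • v) s ⊆ Metric.closedBall (y₀ + t • v) t := by
  refine Metric.closedBall_subset_closedBall' ?_
  calc s + dist (y₀ + s • v) (y₀ + t • v) = s + (t - s) * ‖v‖ := by
        rw [dist_add_left, dist_comm, dist_eq_norm, ← sub_smul, norm_smul,
          Real.norm_of_nonneg (sub_nonneg.2 hst)]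
    _ ≤ t := by nlinarith

variable [InnerProductSpace ℝ E]

theorem mem_ball_add_smul_of_mem_closedBall {y₀ v y : E} (hv : ‖v‖ ≤ 1) (hne : y ≠ y₀) {s t : ℝ}
    (hst : s < t) (hy : y ∈ Metric.closedBall (y₀ + s • v) s) :
    y ∈ Metric.ball (y₀ + t • v) t := by
  have norm_sq_sub (r : ℝ) : ‖y - (y₀ + r • v)‖ ^ 2
      = ‖y - y₀‖ ^ 2 - 2 * r * ⟪y - y₀, v⟫_ℝ + r ^ 2 * ‖v‖ ^ 2 := by
    rw [← sub_sub, norm_sub_sq_real, inner_smul_right, norm_smul, mul_pow, Real.norm_eq_abs,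
      sq_abs]
    ring
  rw [mem_closedBall_iff_norm] at hy
  have hs : 0 ≤ s := (norm_nonneg _).trans hy
  rw [mem_ball_iff_norm, ← sq_lt_sq₀ (norm_nonneg _) (hs.trans hst.le), norm_sq_sub]
  rw [← sq_le_sq₀ (norm_nonneg _) hs, norm_sq_sub] at hy
  have hpos : 0 < ‖y - y₀‖ ^ 2 := pow_pos (norm_pos_iff.2 (sub_ne_zero.2 hne)) 2
  have hv_sq : 0 ≤ 1 - ‖v‖ ^ 2 := sub_nonneg.2 (pow_le_one₀ (norm_nonneg v) hv)
  have hgap : 0 < (t - s) * ‖y - y₀‖ ^ 2 := mul_pos (sub_pos.2 hst) hpos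
  have hgap' : 0 ≤ s * t * (t - s) * (1 - ‖v‖ ^ 2) :=
    mul_nonneg (mul_nonneg (mul_nonneg hs (hs.trans hst.le)) (sub_nonneg.2 hst.le)) hv_sq
  have hscaled := mul_le_mul_of_nonneg_left hy (hs.trans hst.le)
  -- Multiplied by `s`, the claim is the sum of `t` times `hy` and the two gaps.
  refine lt_of_mul_lt_mul_left ?_ hs
  linarith

end TangentBalls

section Calculus

theorem not_isLocalMin_of_approximatesLinearOn {E : Type*} [NormedAddCommGroup E]
    [NormedSpace ℝ E] {f : E → ℝ} {f' : E →L[ℝ] ℝ} {s : Set E} {c : NNReal} {x w : E}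
    (hf : ApproximatesLinearOn f f' s c) (hs : s ∈ 𝓝 x) (hw : f' w + c * ‖w‖ < 0) :
    ¬ IsLocalMin f x := fun hmin => by
  have hline : Tendsto (fun ε : ℝ => x + ε • w) (𝓝[>] 0) (𝓝 x) := by
    have : Continuous fun ε : ℝ => x + ε • w := by fun_prop
    simpa using (this.tendsto 0).mono_left nhdsWithin_le_nhds
  obtain ⟨ε, hεs, hεmin, hε : 0 < ε⟩ :=
    ((hline.eventually_mem hs).and ((hline.eventually hmin).and self_mem_nhdsWithin)).exists
  have hbound : f (x + ε • w) - f x - ε * f' w ≤ c * (ε * ‖w‖) := by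
    simpa only [add_sub_cancel_left, map_smul, smul_eq_mul, norm_smul, Real.norm_of_nonneg hε.le]
      using le_of_abs_le (hf _ hεs _ (mem_of_mem_nhds hs))
  have hdecrease : ε * (f' w + c * ‖w‖) < 0 := mul_neg_of_pos_of_neg hε hw
  linarith

theorem eventually_not_isLocalMin_of_hasStrictFDerivAt {E : Type*} [NormedAddCommGroup E]
    [NormedSpace ℝ E] {f : E → ℝ} {f' : E →L[ℝ] ℝ} {a : E} (hf : HasStrictFDerivAt f f' a)
    (hf' : f' ≠ 0) : ∀ᶠ x in 𝓝 a, ¬ IsLocalMin f x := by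
  obtain ⟨w, hw⟩ : ∃ w, f' w < 0 := by
    obtain ⟨w, hw⟩ := DFunLike.ne_iff.1 hf'
    rcases lt_or_gt_of_ne hw with hneg | hpos
    · exact ⟨w, hneg⟩
    · exact ⟨-w, by simpa using hpos⟩
  obtain ⟨c, hc, hcw⟩ : ∃ c : NNReal, 0 < c ∧ f' w + c * ‖w‖ < 0 := by
    have hlim : Tendsto (fun c : NNReal => f' w + c * ‖w‖) (𝓝[>] 0) (𝓝 (f' w)) := by
      have : Continuous fun c : NNReal => f' w + c * ‖w‖ := by fun_prop
      simpa using (this.tendsto 0).mono_left nhdsWithin_le_nhds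
    have hpos : ∀ᶠ c : NNReal in 𝓝[>] 0, 0 < c := self_mem_nhdsWithin
    exact (hpos.and (hlim.eventually_lt_const hw)).exists
  obtain ⟨s, hs, happrox⟩ := hf.approximates_deriv_on_nhds (Or.inr hc)
  filter_upwards [eventually_mem_nhds_iff.2 hs] with x hx
  exact not_isLocalMin_of_approximatesLinearOn happrox hx hcw

theorem eq_add_smul_of_isMaxOn_closedBall {E : Type*} [NormedAddCommGroup E]
    [InnerProductSpace ℝ E] [CompleteSpace E] {f : E → ℝ} {p c x : E} {r : ℝ}
    (hf : HasGradientAt f p x) (hp : p ≠ 0) (hx : x ∈ Metric.closedBall c r)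
    (hmax : IsMaxOn f (Metric.closedBall c r) x) : x = c + r • (‖p‖⁻¹ • p) := by
  set q : E := ‖p‖⁻¹ • p with hq
  have hq_norm : ‖q‖ = 1 := norm_smul_inv_norm (𝕜 := ℝ) hp
  have hr : 0 ≤ r := Metric.nonneg_of_mem_closedBall hx
  have hpole : c + r • q ∈ Metric.closedBall c r := by
    simp [norm_smul, hq_norm, abs_of_nonneg hr]
  have hnonpos : ⟪p, c + r • q - x⟫_ℝ ≤ 0 :=
    hmax.localize.hasFDerivWithinAt_nonpos hf.hasFDerivAt.hasFDerivWithinAt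
      (sub_mem_posTangentConeAt_of_segment_subset
        ((convex_closedBall c r).segment_subset hx hpole))
  have hinner : r ≤ ⟪x - c, q⟫_ℝ := by
    have hscaled : ⟪c + r • q - x, q⟫_ℝ ≤ 0 := by
      rw [hq, inner_smul_right, ← hq, real_inner_comm]
      exact mul_nonpos_of_nonneg_of_nonpos (inv_nonneg.2 (norm_nonneg p)) hnonpos
    have hsplit : c + r • q - x = r • q - (x - c) := by abel
    rw [hsplit, inner_sub_left, real_inner_smul_left, real_inner_self_eq_norm_sq, hq_norm]
      at hscaled
    linarith
  have hdist : ‖x - c - r • q‖ ^ 2 ≤ 0 := by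
    rw [norm_sub_sq_real, inner_smul_right, norm_smul, hq_norm, Real.norm_of_nonneg hr]
    have : ‖x - c‖ ≤ r := mem_closedBall_iff_norm.1 hx
    nlinarith [norm_nonneg (x - c)]
  have hzero : x - c - r • q = 0 :=
    norm_eq_zero.1 (pow_eq_zero_iff two_ne_zero |>.1 (hdist.antisymm (sq_nonneg _)))
  rw [← sub_eq_iff_eq_add']
  exact sub_eq_zero.1 hzero

theorem hasStrictFDerivAt_toDual_of_hasGradientAt {E : Type*} [NormedAddCommGroup E]
    [InnerProductSpace ℝ E] [CompleteSpace E] {f : E → ℝ} {f' : E → E} {x : E}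
    (hf : ∀ᶠ y in 𝓝 x, HasGradientAt f (f' y) y) (hf' : ContinuousAt f' x) :
    HasStrictFDerivAt f (InnerProductSpace.toDual ℝ E (f' x)) x :=
  hasStrictFDerivAt_of_hasFDerivAt_of_continuousAt
    (f' := fun y => InnerProductSpace.toDual ℝ E (f' y)) hf
    ((InnerProductSpace.toDual ℝ E).continuous.continuousAt.comp hf')

end Calculus

section HopfLax

variable {n : ℕ} {g : Euc n → ℝ} {x y : Euc n} {t : ℝ}

theorem HLu_le (hg : Continuous g) (hy : y ∈ Metric.closedBall x t) : HLu g x t ≤ g y :=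
  csInf_le ((isCompact_closedBall x t).image hg).bddBelow (Set.mem_image_of_mem g hy)

theorem mem_HLL_iff_isMinOn (hg : Continuous g) :
    y ∈ HLL g x t ↔ y ∈ Metric.closedBall x t ∧ IsMinOn g (Metric.closedBall x t) y := by
  rw [mem_closedBall_iff_norm]
  refine and_congr_right fun hy => ⟨fun h z hz => h.trans_le (HLu_le hg hz), fun h => ?_⟩
  exact (IsLeast.csInf_eq ⟨Set.mem_image_of_mem g (mem_closedBall_iff_norm.2 hy),
    Set.forall_mem_image.2 h⟩).symm

theorem mem_HLL_of_tendsto (hg : Continuous g) {ι : Type*} {l : Filter ι} [l.NeBot]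
    {xs ys : ι → Euc n} {ts : ι → ℝ} (ht : t ≠ 0) (hxs : Tendsto xs l (𝓝 x))
    (hys : Tendsto ys l (𝓝 y)) (hts : Tendsto ts l (𝓝 t))
    (hmem : ∀ᶠ i in l, ys i ∈ HLL g (xs i) (ts i)) : y ∈ HLL g x t := by
  rw [mem_HLL_iff_isMinOn hg]
  refine ⟨le_of_tendsto_of_tendsto (hys.dist hxs) hts ?_, ?_⟩
  · filter_upwards [hmem] with i hi using mem_closedBall_iff_norm.2 hi.1
  have hball : Metric.ball x t ⊆ {z | g y ≤ g z} := fun z hz => by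
    refine le_of_tendsto ((hg.tendsto y).comp hys) ?_
    filter_upwards [hmem, (tendsto_const_nhds.dist hxs).eventually_lt hts hz] with i hi hzi
    exact ((mem_HLL_iff_isMinOn hg).1 hi).2 (Metric.mem_closedBall.2 hzi.le)
  change Metric.closedBall x t ⊆ {z | g y ≤ g z}
  rw [← closure_ball x ht]
  exact closure_minimal hball (isClosed_le continuous_const hg)

theorem isMaxOn_HLu_closedBall (hg : Continuous g) (hy : y ∈ HLL g x t) :
    IsMaxOn (fun z => HLu g z t) (Metric.closedBall y t) x := fun _ hz =>
  (HLu_le hg (Metric.mem_closedBall_comm.1 hz)).trans_eq hy.2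

theorem eq_add_smul_of_mem_HLL (hg : Continuous g) {p : Euc n}
    (hp : HasGradientAt (fun z => HLu g z t) p x) (hp0 : p ≠ 0) (hy : y ∈ HLL g x t) :
    x = y + t • (‖p‖⁻¹ • p) :=
  eq_add_smul_of_isMaxOn_closedBall hp hp0
    (Metric.mem_closedBall_comm.1 (mem_closedBall_iff_norm.2 hy.1)) (isMaxOn_HLu_closedBall hg hy)

theorem eq_of_hasFDerivAt_HLu (hg : Continuous g) {f' L : Euc n →L[ℝ] ℝ} (hy : y ∈ HLL g x t)
    (hf' : HasFDerivAt g f' y) (hL : HasFDerivAt (fun z => HLu g z t) L x) : f' = L := by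
  have hxy : x + (y - x) = y := add_sub_cancel x y
  have htranslate : HasFDerivAt (fun z => g (z + (y - x))) f' x := by
    rwa [hasFDerivAt_comp_add_right, hxy]
  have hmin : IsLocalMin (fun z => g (z + (y - x)) - HLu g z t) x := by
    refine Eventually.of_forall fun z => ?_
    have hz : HLu g z t ≤ g (z + (y - x)) := HLu_le hg (by simpa using hy.1)
    simpa only [hxy, hy.2, sub_self] using sub_nonneg.2 hz
  exact sub_eq_zero.1 (hmin.hasFDerivAt_eq_zero (htranslate.sub hL))

theorem not_differentiableAt_HLu_of_mem_HLL_of_ne (hg : Continuous g) {p z : Euc n}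
    (hp : HasGradientAt g p y) (hp0 : p ≠ 0) (hy : y ∈ HLL g x t) (hz : z ∈ HLL g x t)
    (hne : z ≠ y) : ¬ DifferentiableAt ℝ (fun w => HLu g w t) x := fun hdiff => by
  have hgrad : HasGradientAt (fun w => HLu g w t) p x := by
    rw [hasGradientAt_iff_hasFDerivAt, eq_of_hasFDerivAt_HLu hg hy hp.hasFDerivAt hdiff.hasFDerivAt]
    exact hdiff.hasFDerivAt
  exact hne (add_right_cancel
    ((eq_add_smul_of_mem_HLL hg hgrad hp0 hz).symm.trans (eq_add_smul_of_mem_HLL hg hgrad hp0 hy)))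

end HopfLax

section Characteristics

variable {n : ℕ} {g : Euc n → ℝ} {Dg : Euc n → Euc n} {y₀ y : Euc n} {s t : ℝ}

theorem continuous_charX (Dg : Euc n → Euc n) (y₀ : Euc n) : Continuous (charX Dg y₀) := by
  unfold charX
  fun_prop

theorem mem_HLL_charX_of_le (hst : s ≤ t)
    (hy₀s : y₀ ∈ HLL g (charX Dg y₀ s) s) (hy₀t : y₀ ∈ HLL g (charX Dg y₀ t) t)
    (hy : y ∈ HLL g (charX Dg y₀ s) s) : y ∈ HLL g (charX Dg y₀ t) t := by
  refine ⟨?_, (hy.2.trans hy₀s.2.symm).trans hy₀t.2⟩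
  exact mem_closedBall_iff_norm.1 (closedBall_add_smul_subset_closedBall
    (norm_inv_norm_smul_le_one _) hst (mem_closedBall_iff_norm.2 hy.1))

theorem isLocalMin_of_mem_HLL_charX (hg : Continuous g) (hst : s < t)
    (hy₀s : y₀ ∈ HLL g (charX Dg y₀ s) s) (hy₀t : y₀ ∈ HLL g (charX Dg y₀ t) t)
    (hy : y ∈ HLL g (charX Dg y₀ s) s) (hne : y ≠ y₀) : IsLocalMin g y := by
  have hyt := mem_HLL_charX_of_le hst.le hy₀s hy₀t hy
  have hball : y ∈ Metric.ball (charX Dg y₀ t) t := mem_ball_add_smul_of_mem_closedBall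
    (norm_inv_norm_smul_le_one _) hne hst (mem_closedBall_iff_norm.2 hy.1)
  exact ((mem_HLL_iff_isMinOn hg).1 hyt).2.isLocalMin
    (mem_of_superset (Metric.isOpen_ball.mem_nhds hball) Metric.ball_subset_closedBall)

end Characteristics

section TerminationTimes

variable {n : ℕ} {g : Euc n → ℝ} {Dg : Euc n → Euc n} {y₀ : Euc n} {t : ℝ}

theorem mem_HLL_charX_of_lt_tsnd (ht : 0 < t) (hts : ENNReal.ofReal t < tsnd g Dg y₀) :
    y₀ ∈ HLL g (charX Dg y₀ t) t :=
  not_not.1 fun hnot => hts.not_ge (sInf_le (Set.mem_image_of_mem _ ⟨ht, hnot⟩))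

theorem mem_HLL_charX_of_le_tsnd (hg : Continuous g) (ht : 0 < t)
    (hts : ENNReal.ofReal t ≤ tsnd g Dg y₀) : y₀ ∈ HLL g (charX Dg y₀ t) t := by
  have htendsto : Tendsto id (𝓝[<] t) (𝓝 t) := nhdsWithin_le_nhds
  refine mem_HLL_of_tendsto hg ht.ne' (((continuous_charX Dg y₀).tendsto t).comp htendsto)
    tendsto_const_nhds htendsto ?_
  filter_upwards [Ioo_mem_nhdsLT ht] with s hs
  exact mem_HLL_charX_of_lt_tsnd hs.1 (((ENNReal.ofReal_lt_ofReal_iff ht).2 hs.2).trans_le hts)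

theorem exists_ne_mem_HLL_charX_of_tbar_lt_of_lt_tsnd (ht : 0 < t)
    (htb : tbar g Dg y₀ < ENNReal.ofReal t) (hts : ENNReal.ofReal t < tsnd g Dg y₀) :
    ∃ y ∈ HLL g (charX Dg y₀ t) t, y ≠ y₀ := by
  by_contra! hunique
  have hsingleton : HLL g (charX Dg y₀ t) t = {y₀} :=
    Set.eq_singleton_iff_unique_mem.2 ⟨mem_HLL_charX_of_lt_tsnd ht hts, hunique⟩
  exact htb.not_ge (le_sSup (Set.mem_image_of_mem _ ⟨ht, hsingleton⟩))

theorem exists_ne_mem_HLL_charX_of_tbar_le_of_lt_tsnd (hg : Continuous g) {f' : Euc n →L[ℝ] ℝ}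
    (hf' : HasStrictFDerivAt g f' y₀) (hf'0 : f' ≠ 0) (ht : 0 < t)
    (htb : tbar g Dg y₀ ≤ ENNReal.ofReal t) (hts : ENNReal.ofReal t < tsnd g Dg y₀) :
    ∃ y ∈ HLL g (charX Dg y₀ t) t, y ≠ y₀ := by
  obtain ⟨T, -, htT', hTs⟩ := ENNReal.lt_iff_exists_real_btwn.1 hts
  have htT : t < T := (ENNReal.ofReal_lt_ofReal_iff'.1 htT').1
  have hy₀T := mem_HLL_charX_of_lt_tsnd (ht.trans htT) hTs
  obtain ⟨ts, -, hts_mem, hts_lim⟩ := exists_seq_strictAnti_tendsto' htT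
  have hts_pos (k : ℕ) : 0 < ts k := ht.trans (hts_mem k).1
  have hts_tsnd (k : ℕ) : ENNReal.ofReal (ts k) < tsnd g Dg y₀ :=
    (ENNReal.ofReal_le_ofReal (hts_mem k).2.le).trans_lt hTs
  have hy₀s (k : ℕ) := mem_HLL_charX_of_lt_tsnd (hts_pos k) (hts_tsnd k)
  have hsecond (k : ℕ) : ∃ y ∈ HLL g (charX Dg y₀ (ts k)) (ts k), y ≠ y₀ :=
    exists_ne_mem_HLL_charX_of_tbar_lt_of_lt_tsnd (hts_pos k)
      (htb.trans_lt ((ENNReal.ofReal_lt_ofReal_iff (hts_pos k)).2 (hts_mem k).1)) (hts_tsnd k)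
  choose ys hys_mem hys_ne using hsecond
  have hys_min (k : ℕ) : IsLocalMin g (ys k) :=
    isLocalMin_of_mem_HLL_charX hg (hts_mem k).2 (hy₀s k) hy₀T (hys_mem k) (hys_ne k)
  have hys_ball (k : ℕ) : ys k ∈ Metric.closedBall (charX Dg y₀ T) T :=
    mem_closedBall_iff_norm.2
      (mem_HLL_charX_of_le (hts_mem k).2.le (hy₀s k) hy₀T (hys_mem k)).1
  obtain ⟨y, -, φ, hφ, hy_lim⟩ := (isCompact_closedBall _ _).tendsto_subseq hys_ball
  have htφ : Tendsto (ts ∘ φ) atTop (𝓝 t) := hts_lim.comp hφ.tendsto_atTop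
  refine ⟨y, mem_HLL_of_tendsto hg ht.ne' (((continuous_charX Dg y₀).tendsto t).comp htφ) hy_lim
    htφ (Eventually.of_forall fun k => hys_mem (φ k)), ?_⟩
  rintro rfl
  obtain ⟨k, hk⟩ :=
    (hy_lim.eventually (eventually_not_isLocalMin_of_hasStrictFDerivAt hf' hf'0)).exists
  exact hk (hys_min (φ k))

theorem exists_ne_mem_HLL_charX_of_tbar_le_of_le_tsnd (hg : Continuous g) {f' : Euc n →L[ℝ] ℝ}
    (hf' : HasStrictFDerivAt g f' y₀) (hf'0 : f' ≠ 0) (hlt : tbar g Dg y₀ < tsnd g Dg y₀)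
    (ht : 0 < t) (htb : tbar g Dg y₀ ≤ ENNReal.ofReal t) (hts : ENNReal.ofReal t ≤ tsnd g Dg y₀) :
    ∃ y ∈ HLL g (charX Dg y₀ t) t, y ≠ y₀ := by
  rcases hts.lt_or_eq with hts_lt | hts_eq
  · exact exists_ne_mem_HLL_charX_of_tbar_le_of_lt_tsnd hg hf' hf'0 ht htb hts_lt
  obtain ⟨s, -, hsb, hss⟩ := ENNReal.lt_iff_exists_real_btwn.1 hlt
  have hs : 0 < s := ENNReal.ofReal_pos.1 (pos_of_gt hsb)
  have hst : s ≤ t := (ENNReal.ofReal_le_ofReal_iff ht.le).1 (hss.le.trans_eq hts_eq.symm)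
  obtain ⟨y, hy, hne⟩ := exists_ne_mem_HLL_charX_of_tbar_lt_of_lt_tsnd hs hsb hss
  exact ⟨y, mem_HLL_charX_of_le hst (mem_HLL_charX_of_lt_tsnd hs hss)
    (mem_HLL_charX_of_le_tsnd hg ht hts) hy, hne⟩

end TerminationTimes

theorem segment_between_termination_points_nondifferentiable_general {n : ℕ} {g : Euc n → ℝ}
    {Dg : Euc n → Euc n} {y₀ : Euc n} (hg : Continuous g)
    (hDg : HasStrictFDerivAt g (InnerProductSpace.toDual ℝ (Euc n) (Dg y₀)) y₀) (hy : Dg y₀ ≠ 0)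
    (hlt : tbar g Dg y₀ < tsnd g Dg y₀) {t : ℝ} (ht : 0 < t)
    (htb : tbar g Dg y₀ ≤ ENNReal.ofReal t) (hts : ENNReal.ofReal t ≤ tsnd g Dg y₀) :
    ¬ DifferentiableAt ℝ (fun x => HLu g x t) (charX Dg y₀ t) := by
  obtain ⟨y, hyL, hne⟩ := exists_ne_mem_HLL_charX_of_tbar_le_of_le_tsnd hg hDg
    ((map_ne_zero_iff _ (InnerProductSpace.toDual ℝ (Euc n)).injective).2 hy) hlt ht htb hts
  exact not_differentiableAt_HLu_of_mem_HLL_of_ne hg hDg.hasFDerivAt hy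
    (mem_HLL_charX_of_le_tsnd hg ht hts) hyL hne

theorem segment_between_termination_points_nondifferentiable {n : ℕ} (hn : 0 < n) (g : Euc n → ℝ) (Dg : Euc n → Euc n)
    (hg : ∀ y, HasGradientAt g (Dg y) y) (hDg : Continuous Dg)
    (y₀ : Euc n) (hy : Dg y₀ ≠ 0)
    (hlt : tbar g Dg y₀ < tsnd g Dg y₀) (hfin : tbar g Dg y₀ < ⊤) :
    ∀ t : ℝ, 0 < t → tbar g Dg y₀ ≤ ENNReal.ofReal t → ENNReal.ofReal t ≤ tsnd g Dg y₀ →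
      ¬ DifferentiableAt ℝ (fun p : Euc n × ℝ => HLu g p.1 p.2) (charX Dg y₀ t, t) := by
  intro t ht htb hts hdiff
  exact segment_between_termination_points_nondifferentiable_general
    (continuous_iff_continuousAt.2 fun y => (hg y).continuousAt)
    (hasStrictFDerivAt_toDual_of_hasGradientAt (Eventually.of_forall hg) hDg.continuousAt)
    hy hlt ht htb hts (DifferentiableAt.comp (f := fun x => (x, t)) _ hdiff (by fun_prop))
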